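/- Let G : Finset(ℝ^d) → ℝ and let η be a finite subset of ℝ^d. Assume that for every ξ ⊆ η and every pair of distinct x₁, x₂ ∈ η, the functions (y₁,y₂) ↦ c(x₁,x₂,y₁,y₂)·G(ξ ∪ {y₁}), (y₁,y₂) ↦ c(x₁,x₂,y₁,y₂)·G(ξ ∪ {y₂}), (y₁,y₂) ↦ c(x₁,x₂,y₁,y₂)·G(ξ ∪ {y₁,y₂}) and (y₁,y₂) ↦ c(x₁,x₂,y₁,y₂) are Lebesgue-integrable on ℝ^d × ℝ^d. Define, for F : Finset(ℝ^d) → ℝ, (LF)(γ) := Σ_{{x₁,x₂}⊆γ} ∫∫ c(x₁,x₂,y₁,y₂)·[F((γ∖{x₁,x₂}) ∪ {y₁,y₂}) − F(γ)] dy₁dy₂; (KG)(γ) := Σ_{ξ⊆γ} G(ξ); (K⁻¹F)(γ) := Σ_{ξ⊆γ} (−1)^{|γ∖ξ|} F(ξ). Then (K⁻¹ L K G)(η) = (L₀G)(η) + (WG)(η), where (L₀G)(η) := Σ_{{x₁,x₂}⊆η} ∫∫ c(x₁,x₂,y₁,y₂)·[G((η∖{x₁,x₂}) ∪ {y₁,y₂})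 − G(η)] dy₁dy₂ and (WG)(η) := Σ_{x₂∈η} Σ_{x₁∈η∖{x₂}} ∫ c̃(x₁,x₂,y)·[G(((η∖{x₂})∖{x₁}) ∪ {y}) − G(η∖{x₂})] dy. -/

import Mathlib

open MeasureTheory

noncomputable section

/-- `ℝ^d` -/
abbrev Rd (d : ℕ) : Type := Fin d → ℝ

/-- The K-transform on finite configurations: `(KG)(γ) = Σ_{ξ ⊆ γ} G(ξ)`. -/
def Ktr {α : Type*} [DecidableEq α] (G : Finset α → ℝ) (γ : Finset α) : ℝ :=
  ∑ ξ ∈ γ.powerset, G ξ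

/-- The inverse K-transform: `(K⁻¹F)(γ) = Σ_{ξ ⊆ γ} (−1)^{|γ∖ξ|} F(ξ)`. -/
def Kinv {α : Type*} [DecidableEq α] (F : Finset α → ℝ) (γ : Finset α) : ℝ :=
  ∑ ξ ∈ γ.powerset, (-1 : ℝ) ^ (γ \ ξ).card * F ξ

/-- `c̃(x₁,x₂,y₁) := ∫ c(x₁,x₂,y₁,y₂) dy₂`. -/
def ctil (d : ℕ) (c : Rd d → Rd d → Rd d → Rd d → ℝ) (x₁ x₂ y₁ : Rd d) : ℝ :=
  ∫ y₂ : Rd d, c x₁ x₂ y₁ y₂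

/-- The binary-jump generator on functions of finite configurations:
`(LF)(γ) = Σ_{{x₁,x₂}⊆γ} ∫∫ c(x₁,x₂,y₁,y₂)·[F((γ∖{x₁,x₂})∪{y₁,y₂}) − F(γ)] dy₁dy₂`
(the unordered-pair sum is written as half the ordered-pair sum, using the symmetry
of `c` in its first two arguments). -/
def Lgen (d : ℕ) (c : Rd d → Rd d → Rd d → Rd d → ℝ)
    (F : Finset (Rd d) → ℝ) (γ : Finset (Rd d)) : ℝ :=
  (1 / 2 : ℝ) * ∑ x₁ ∈ γ, ∑ x₂ ∈ γ.erase x₁,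
    ∫ y : Rd d × Rd d, c x₁ x₂ y.1 y.2 *
      (F ((γ \ {x₁, x₂}) ∪ {y.1, y.2}) - F γ)

/-- `(WG)(η) = Σ_{x₂∈η} Σ_{x₁∈η∖{x₂}} ∫ c̃(x₁,x₂,y)·[G(((η∖{x₂})∖{x₁})∪{y}) − G(η∖{x₂})] dy`. -/
def Wgen (d : ℕ) (c : Rd d → Rd d → Rd d → Rd d → ℝ)
    (G : Finset (Rd d) → ℝ) (η : Finset (Rd d)) : ℝ :=
  ∑ x₂ ∈ η, ∑ x₁ ∈ η.erase x₂,
    ∫ y : Rd d, ctil d c x₁ x₂ y *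
      (G (((η \ {x₂}) \ {x₁}) ∪ {y}) - G (η \ {x₂}))

lemma Kinv_congr' {α : Type*} [DecidableEq α] {F F' : Finset α → ℝ} {s : Finset α}
    (h : ∀ γ ⊆ s, F γ = F' γ) : Kinv F s = Kinv F' s := by
  unfold Kinv
  refine Finset.sum_congr rfl fun γ hγ => ?_
  rw [h γ (Finset.mem_powerset.1 hγ)]

lemma Kinv_insert' {α : Type*} [DecidableEq α] (F : Finset α → ℝ) {a : α} {s : Finset α}
    (ha : a ∉ s) : Kinv F (insert a s) = Kinv (fun γ => F (insert a γ)) s - Kinv F s := by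
  unfold Kinv
  rw [Finset.sum_powerset_insert ha, sub_eq_add_neg, add_comm, ← Finset.sum_neg_distrib]
  congr 1
  · refine Finset.sum_congr rfl fun γ hγ => ?_
    rw [Finset.insert_sdiff_insert, Finset.sdiff_insert_of_notMem ha]
  · refine Finset.sum_congr rfl fun γ hγ => ?_
    have h : a ∉ γ := fun h => ha (Finset.mem_powerset.1 hγ h)
    rw [Finset.insert_sdiff_of_notMem _ h, Finset.card_insert_of_notMem (by simp [ha]), pow_succ]
    ring

lemma Ktr_insert' {α : Type*} [DecidableEq α] (F : Finset α → ℝ) {a : α} {s : Finset α}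
    (ha : a ∉ s) : Ktr F (insert a s) = Ktr F s + Ktr (fun γ => F (insert a γ)) s := by
  unfold Ktr
  rw [Finset.sum_powerset_insert ha]

lemma Kinv_Ktr' {α : Type*} [DecidableEq α] (s : Finset α) :
    ∀ H : Finset α → ℝ, Kinv (Ktr H) s = H s := by
  induction s using Finset.induction_on with
  | empty => intro H; simp [Kinv, Ktr]
  | insert a s ha ih =>
    intro H
    rw [Kinv_insert' _ ha, Kinv_congr' (F' := fun γ => Ktr H γ + Ktr (fun γ => H (insert a γ)) γ)
      (fun γ hγ => Ktr_insert' H fun h => ha (hγ h))]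
    have : Kinv (fun γ => Ktr H γ + Ktr (fun γ => H (insert a γ)) γ) s
        = Kinv (Ktr H) s + Kinv (Ktr (fun γ => H (insert a γ))) s := by
      simp [Kinv, mul_add, Finset.sum_add_distrib]
    rw [this, ih, ih]
    ring

lemma Kinv_sum' {α : Type*} [DecidableEq α] (Ψ : α → Finset α → ℝ) (η : Finset α) :
    Kinv (fun γ => ∑ x ∈ γ, Ψ x (γ.erase x)) η = ∑ x ∈ η, Kinv (Ψ x) (η.erase x) := by
  unfold Kinv
  simp_rw [Finset.mul_sum]
  rw [Finset.sum_comm' (t' := η) (s' := fun x => η.powerset.filter (fun γ => x ∈ γ))]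
  · refine Finset.sum_congr rfl fun x hx => ?_
    refine Finset.sum_bij' (fun γ _ => γ.erase x) (fun γ _ => insert x γ) ?_ ?_ ?_ ?_ ?_
    · intro γ hγ
      simp only [Finset.mem_filter, Finset.mem_powerset] at hγ ⊢
      exact Finset.erase_subset_erase _ hγ.1
    · intro γ hγ
      simp only [Finset.mem_filter, Finset.mem_powerset] at hγ ⊢
      exact ⟨by grind, by simp⟩
    · intro γ hγ
      simp only [Finset.mem_filter] at hγ
      exact Finset.insert_erase hγ.2
    · intro γ hγ
      simp only [Finset.mem_powerset] at hγ
      exact Finset.erase_insert (by grind)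
    · intro γ hγ
      simp only [Finset.mem_filter, Finset.mem_powerset] at hγ
      congr 3
      grind
  · intro γ x
    simp only [Finset.mem_filter, Finset.mem_powerset]
    grind

lemma Kinv_sum2' {α : Type*} [DecidableEq α] (Φ : α → α → Finset α → ℝ) (η : Finset α) :
    Kinv (fun γ => ∑ x₁ ∈ γ, ∑ x₂ ∈ γ.erase x₁, Φ x₁ x₂ ((γ.erase x₁).erase x₂)) η =
      ∑ x₁ ∈ η, ∑ x₂ ∈ η.erase x₁, Kinv (Φ x₁ x₂) ((η.erase x₁).erase x₂) := by
  rw [Kinv_sum' (fun x₁ δ => ∑ x₂ ∈ δ, Φ x₁ x₂ (δ.erase x₂))]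
  exact Finset.sum_congr rfl fun x _ => Kinv_sum' _ _

lemma Ktr_pair' {α : Type*} [DecidableEq α] (G : Finset α → ℝ) (s : Finset α) {a b : α}
    (ha : a ∉ s) (hb : b ∉ s) (hab : a ≠ b) :
    Ktr G (s ∪ {a, b}) =
      Ktr (fun ξ => G ξ + G (ξ ∪ {a}) + G (ξ ∪ {b}) + G (ξ ∪ {a, b})) s := by
  have : s ∪ {a, b} = insert a (insert b s) := by grind
  rw [this, Ktr_insert' _ (by grind), Ktr_insert' _ hb, Ktr_insert' _ hb]
  unfold Ktr
  simp_rw [← Finset.sum_add_distrib]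
  refine Finset.sum_congr rfl fun ξ _ => ?_
  have h1 : ξ ∪ {a} = insert a ξ := by grind
  have h2 : ξ ∪ {b} = insert b ξ := by grind
  have h3 : ξ ∪ {a, b} = insert a (insert b ξ) := by grind
  rw [h1, h2, h3]; ring

lemma ae_generic' (d : ℕ) (hd : 1 ≤ d) (s : Finset (Rd d)) :
    ∀ᵐ y : Rd d × Rd d, y.1 ∉ s ∧ y.2 ∉ s ∧ y.1 ≠ y.2 := by
  have : Nonempty (Fin d) := ⟨⟨0, hd⟩⟩
  have hs : ∀ᵐ x : Rd d, x ∉ s := by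
    have := (s.finite_toSet).measure_zero (volume : Measure (Rd d))
    exact measure_eq_zero_iff_ae_notMem.1 this
  have h1 : ∀ᵐ y : Rd d × Rd d, y.1 ∉ s :=
    Measure.quasiMeasurePreserving_fst.ae hs
  have h2 : ∀ᵐ y : Rd d × Rd d, y.2 ∉ s :=
    Measure.quasiMeasurePreserving_snd.ae hs
  have h3 : ∀ᵐ y : Rd d × Rd d, y.1 ≠ y.2 := by
    rw [Measure.volume_eq_prod, Measure.ae_prod_iff_ae_ae]
    · refine Filter.Eventually.of_forall fun x => ?_
      have : (volume : Measure (Rd d)) {x} = 0 := measure_singleton x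
      filter_upwards [measure_eq_zero_iff_ae_notMem.1 this] with y hy h
      exact hy (by simp [h])
    · exact (measurableSet_eq_fun measurable_fst measurable_snd).compl
  filter_upwards [h1, h2, h3] with y a b c using ⟨a, b, c⟩

/-- The jump term. -/
def Hjump (d : ℕ) (c : Rd d → Rd d → Rd d → Rd d → ℝ) (G : Finset (Rd d) → ℝ)
    (x₁ x₂ : Rd d) (ξ : Finset (Rd d)) : ℝ :=
  (∫ y : Rd d × Rd d, c x₁ x₂ y.1 y.2 * (G (ξ ∪ {y.1, y.2}) - G (ξ ∪ {x₁, x₂}))) +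
  ((∫ y : Rd d × Rd d, c x₁ x₂ y.1 y.2 * (G (ξ ∪ {y.1}) - G (ξ ∪ {x₁}))) +
  ∫ y : Rd d × Rd d, c x₁ x₂ y.1 y.2 * (G (ξ ∪ {y.2}) - G (ξ ∪ {x₂})))

/-- The image of the binary-jump generator under the K-transform:
`(K⁻¹ L K G)(η) = (L₀G)(η) + (WG)(η)`. -/
theorem statement18
    (d : ℕ) (hd : 1 ≤ d)
    (c : Rd d → Rd d → Rd d → Rd d → ℝ)
    (hc_meas : Measurable fun p : (Rd d × Rd d) × Rd d × Rd d => c p.1.1 p.1.2 p.2.1 p.2.2)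
    (hc_nonneg : ∀ x₁ x₂ y₁ y₂, 0 ≤ c x₁ x₂ y₁ y₂)
    (hc_sym12 : ∀ x₁ x₂ y₁ y₂, c x₁ x₂ y₁ y₂ = c x₂ x₁ y₁ y₂)
    (hc_sym34 : ∀ x₁ x₂ y₁ y₂, c x₁ x₂ y₁ y₂ = c x₁ x₂ y₂ y₁)
    (G : Finset (Rd d) → ℝ) (η : Finset (Rd d))
    -- integrability hypotheses
    (hint : ∀ ξ ∈ η.powerset, ∀ x₁ ∈ η, ∀ x₂ ∈ η, x₁ ≠ x₂ →
      Integrable (fun y : Rd d × Rd d => c x₁ x₂ y.1 y.2 * G (ξ ∪ {y.1})) ∧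
      Integrable (fun y : Rd d × Rd d => c x₁ x₂ y.1 y.2 * G (ξ ∪ {y.2})) ∧
      Integrable (fun y : Rd d × Rd d => c x₁ x₂ y.1 y.2 * G (ξ ∪ {y.1, y.2})) ∧
      Integrable (fun y : Rd d × Rd d => c x₁ x₂ y.1 y.2)) :
    Kinv (fun γ => Lgen d c (Ktr G) γ) η =
      Lgen d c G η + Wgen d c G η := by
  have hI1 : ∀ ξ ⊆ η, ∀ x₁ ∈ η, ∀ x₂ ∈ η, x₁ ≠ x₂ → ∀ a : ℝ,
      Integrable (fun y : Rd d × Rd d => c x₁ x₂ y.1 y.2 * (G (ξ ∪ {y.1}) - a)) := by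
    intro ξ hξ x₁ h₁ x₂ h₂ hne a
    obtain ⟨i1, i2, i3, i4⟩ := hint ξ (Finset.mem_powerset.2 hξ) x₁ h₁ x₂ h₂ hne
    simp_rw [mul_sub]
    exact i1.sub (i4.mul_const a)
  have hI2 : ∀ ξ ⊆ η, ∀ x₁ ∈ η, ∀ x₂ ∈ η, x₁ ≠ x₂ → ∀ a : ℝ,
      Integrable (fun y : Rd d × Rd d => c x₁ x₂ y.1 y.2 * (G (ξ ∪ {y.2}) - a)) := by
    intro ξ hξ x₁ h₁ x₂ h₂ hne a
    obtain ⟨i1, i2, i3, i4⟩ := hint ξ (Finset.mem_powerset.2 hξ) x₁ h₁ x₂ h₂ hne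
    simp_rw [mul_sub]
    exact i2.sub (i4.mul_const a)
  have hI3 : ∀ ξ ⊆ η, ∀ x₁ ∈ η, ∀ x₂ ∈ η, x₁ ≠ x₂ → ∀ a : ℝ,
      Integrable (fun y : Rd d × Rd d => c x₁ x₂ y.1 y.2 * (G (ξ ∪ {y.1, y.2}) - a)) := by
    intro ξ hξ x₁ h₁ x₂ h₂ hne a
    obtain ⟨i1, i2, i3, i4⟩ := hint ξ (Finset.mem_powerset.2 hξ) x₁ h₁ x₂ h₂ hne
    simp_rw [mul_sub]
    exact i3.sub (i4.mul_const a)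
  have hsd : ∀ (γ : Finset (Rd d)) (x₁ x₂ : Rd d), γ \ {x₁, x₂} = (γ.erase x₁).erase x₂ := by
    intro γ x₁ x₂; grind
  -- step 1: `L K G` on subsets of `η`
  have hLK : ∀ γ ⊆ η, Lgen d c (Ktr G) γ = (fun γ => ∑ x₁ ∈ γ, ∑ x₂ ∈ γ.erase x₁,
      (fun x₁ x₂ δ => (1 / 2 : ℝ) * Ktr (Hjump d c G x₁ x₂) δ) x₁ x₂
        ((γ.erase x₁).erase x₂)) γ := by
    intro γ hγ
    unfold Lgen
    simp only [Finset.mul_sum]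
    refine Finset.sum_congr rfl fun x₁ h₁ => Finset.sum_congr rfl fun x₂ h₂ => ?_
    congr 1
    have hne : x₁ ≠ x₂ := (Finset.ne_of_mem_erase h₂).symm
    have h₂γ : x₂ ∈ γ := Finset.mem_of_mem_erase h₂
    rw [← hsd]
    set δ := γ \ {x₁, x₂} with hδ
    have hγδ : γ = δ ∪ {x₁, x₂} := by grind
    have hx₁ : x₁ ∉ δ := by grind
    have hx₂ : x₂ ∉ δ := by grind
    have hδη : δ ⊆ η := by grind
    have hK : Ktr G γ = Ktr (fun ξ => G ξ + G (ξ ∪ {x₁}) + G (ξ ∪ {x₂}) + G (ξ ∪ {x₁, x₂})) δ := by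
      rw [hγδ, Ktr_pair' G δ hx₁ hx₂ hne]
    have hstep : (∫ y : Rd d × Rd d, c x₁ x₂ y.1 y.2 * (Ktr G (δ ∪ {y.1, y.2}) - Ktr G γ)) =
        ∫ y : Rd d × Rd d, ∑ ξ ∈ δ.powerset,
          (c x₁ x₂ y.1 y.2 * (G (ξ ∪ {y.1, y.2}) - G (ξ ∪ {x₁, x₂})) +
          (c x₁ x₂ y.1 y.2 * (G (ξ ∪ {y.1}) - G (ξ ∪ {x₁})) +
          c x₁ x₂ y.1 y.2 * (G (ξ ∪ {y.2}) - G (ξ ∪ {x₂})))) := by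
      refine integral_congr_ae ?_
      filter_upwards [ae_generic' d hd δ] with y hy
      rw [Ktr_pair' G δ hy.1 hy.2.1 hy.2.2, hK]
      unfold Ktr
      rw [← Finset.sum_sub_distrib, Finset.mul_sum]
      refine Finset.sum_congr rfl fun ξ _ => ?_
      ring
    rw [hstep]
    have hsub : ∀ ξ ∈ δ.powerset, ξ ⊆ η := fun ξ hξ => (Finset.mem_powerset.1 hξ).trans hδη
    have e₁ := hγ h₁
    have e₂ := hγ h₂γ
    rw [integral_finsetSum]
    · unfold Ktr
      refine Finset.sum_congr rfl fun ξ hξ => ?_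
      have j1 := hI1 ξ (hsub ξ hξ) x₁ e₁ x₂ e₂ hne (G (ξ ∪ {x₁}))
      have j2 := hI2 ξ (hsub ξ hξ) x₁ e₁ x₂ e₂ hne (G (ξ ∪ {x₂}))
      have j3 := hI3 ξ (hsub ξ hξ) x₁ e₁ x₂ e₂ hne (G (ξ ∪ {x₁, x₂}))
      unfold Hjump
      rw [← integral_add j1 j2]
      exact integral_add j3 (j1.add j2)
    · intro ξ hξ
      exact (hI3 ξ (hsub ξ hξ) x₁ e₁ x₂ e₂ hne _).add
        ((hI1 ξ (hsub ξ hξ) x₁ e₁ x₂ e₂ hne _).add (hI2 ξ (hsub ξ hξ) x₁ e₁ x₂ e₂ hne _))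
  rw [Kinv_congr' hLK]
  refine (Kinv_sum2' (fun x₁ x₂ δ => (1 / 2 : ℝ) * Ktr (Hjump d c G x₁ x₂) δ) η).trans ?_
  have hKK : ∀ x₁ x₂ s, Kinv (fun δ => (1 / 2 : ℝ) * Ktr (Hjump d c G x₁ x₂) δ) s
      = (1 / 2 : ℝ) * Hjump d c G x₁ x₂ s := by
    intro x₁ x₂ s
    rw [← Kinv_Ktr' s (Hjump d c G x₁ x₂)]
    unfold Kinv
    rw [Finset.mul_sum]
    exact Finset.sum_congr rfl fun ξ _ => by ring
  simp only [hKK]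
  -- the one-point terms
  let A : Rd d → Rd d → ℝ := fun x₁ x₂ =>
    ∫ y : Rd d × Rd d, c x₁ x₂ y.1 y.2 *
      (G ((η \ {x₁, x₂}) ∪ {y.1}) - G ((η \ {x₁, x₂}) ∪ {x₁}))
  have hH : ∀ x₁ ∈ η, ∀ x₂ ∈ η.erase x₁, Hjump d c G x₁ x₂ ((η.erase x₁).erase x₂) =
      (∫ y : Rd d × Rd d, c x₁ x₂ y.1 y.2 *
        (G ((η \ {x₁, x₂}) ∪ {y.1, y.2}) - G η)) + (A x₁ x₂ + A x₂ x₁) := by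
    intro x₁ h₁ x₂ h₂
    rw [← hsd]
    unfold Hjump
    have hη : η \ {x₁, x₂} ∪ {x₁, x₂} = η := by grind
    have hB : (∫ y : Rd d × Rd d, c x₁ x₂ y.1 y.2 *
        (G (η \ {x₁, x₂} ∪ {y.2}) - G (η \ {x₁, x₂} ∪ {x₂}))) = A x₂ x₁ := by
      simp only [A]
      rw [Finset.pair_comm x₂ x₁, Measure.volume_eq_prod, ← integral_prod_swap]
      refine integral_congr_ae (Filter.Eventually.of_forall fun y => ?_)
      simp only [Prod.fst_swap, Prod.snd_swap]
      rw [hc_sym12 x₁ x₂, hc_sym34 x₂ x₁]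
    rw [hη, hB]
  have hW : Wgen d c G η = ∑ x₂ ∈ η, ∑ x₁ ∈ η.erase x₂, A x₁ x₂ := by
    unfold Wgen
    refine Finset.sum_congr rfl fun x₂ h₂ => Finset.sum_congr rfl fun x₁ h₁ => ?_
    have hne : x₁ ≠ x₂ := Finset.ne_of_mem_erase h₁
    have h₁η : x₁ ∈ η := Finset.mem_of_mem_erase h₁
    have e1 : (η \ {x₂}) \ {x₁} = η \ {x₁, x₂} := by grind
    have e2 : η \ {x₂} = η \ {x₁, x₂} ∪ {x₁} := by grind
    rw [e1, e2]
    have hi := hI1 (η \ {x₁, x₂}) Finset.sdiff_subset x₁ h₁η x₂ h₂ hne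
      (G (η \ {x₁, x₂} ∪ {x₁}))
    simp only [A]
    rw [Measure.volume_eq_prod] at hi ⊢
    rw [integral_prod _ hi]
    refine integral_congr_ae (Filter.Eventually.of_forall fun y => ?_)
    simp only [ctil]
    rw [integral_mul_const]
  have hswap : ∑ x₁ ∈ η, ∑ x₂ ∈ η.erase x₁, A x₁ x₂ = ∑ x₂ ∈ η, ∑ x₁ ∈ η.erase x₂, A x₁ x₂ := by
    refine Finset.sum_comm' fun x y => ?_
    grind
  have hfin : ∑ x₁ ∈ η, ∑ x₂ ∈ η.erase x₁,
      (1 / 2 : ℝ) * Hjump d c G x₁ x₂ ((η.erase x₁).erase x₂) =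
      ∑ x₁ ∈ η, ∑ x₂ ∈ η.erase x₁, (1 / 2 : ℝ) * ((∫ y : Rd d × Rd d, c x₁ x₂ y.1 y.2 *
        (G ((η \ {x₁, x₂}) ∪ {y.1, y.2}) - G η)) + (A x₁ x₂ + A x₂ x₁)) :=
    Finset.sum_congr rfl fun x₁ h₁ => Finset.sum_congr rfl fun x₂ h₂ => by rw [hH x₁ h₁ x₂ h₂]
  rw [hfin, hW]
  unfold Lgen
  simp only [← Finset.mul_sum, Finset.sum_add_distrib]
  rw [hswap]
  ring
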